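/- Let n ≥ 2 and k ≥ 1 be integers, fix a primitive n-th root of unity ξ ∈ ℂ, and assume that there is no tuple I = (I₀, …, I_{n−1}) ∈ ℕ^{n} with I₀ + ⋯ + I_{n−1} = k and Σ_{i=0}^{n−1} I_i·ξ^i = 0 (this holds, for example, when n is prime and n ∤ k, and it implies gcd(k, n) = 1). In the polynomial ring R = ℂ[z][x₀, …, x_{n−1}], let D be the unique ℂ[z]-linear derivation with D(x_i) = x_{i+1} for 0 ≤ i ≤ n−2 and D(x_{n−1}) = z·x₀, let P_k ⊆ R be the ℂ[z]-submodule of polynomials homogeneous of total degree k in x₀, …, x_{n−1}, and define θ : P_k → P_k by θ(f) = ∂f/∂z + D(f). Then θ is injective, its cokernel is a finite-dimensional ℂ-vector space, and n·dim_ℂ coker(θ) equals the binomial coefficient C(k+n−1, n−1). -/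

import Mathlib

/-!
Give `z` weight `n` and `x_i` weight `i`. On `P_k` the derivation `D` raises the weight by `1`,
while `∂/∂z` lowers it by `n`; so `D` is the leading part of `θ` for the (finite-dimensional)
weight components `gr n k d` and the weight filtration `fil n k d`.

`D` is injective on each weight component (`airyD_injective`): nothing is lost by setting `z = 1`
there, after which `D` is the derivation permuting the `x_i` cyclically. The discrete Fourier
transform diagonalises it, with eigenvalue `∑ I_j ξ^j` on the monomial `y^I`, and these are nonzero
by hypothesis.

Hence the dimensions of the components are nondecreasing in the weight. In `n` consecutive large
weights every monomial `x^I` of degree `k` occurs exactly once up to a power of `z`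
(`sum_finrank_gr`), so these dimensions sum to `C(k+n-1, n-1)`. Therefore they are constant from
some weight on, equal to `C(k+n-1, n-1) / n`, and from there `D` is bijective between consecutive
components.

It follows that `θ` is injective and that its cokernel equals the cokernel of
`θ : fil n k d → fil n k (d + 1)` for large `d` (`finrank_coker`), of dimension `dim (gr n k d)`.
-/

open MvPolynomial

/-- We model `R = ℂ[z][x₀, …, x_{n-1}]` as `MvPolynomial (Fin (n+1)) ℂ`, the variable of
index `0` playing the role of `z` and the variable of index `i+1` playing the role of
`x_i`.  These are the values on the variables of the derivation `D` with `D(z) = 0` (so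
`D` is `ℂ[z]`-linear), `D(x_i) = x_{i+1}` for `0 ≤ i ≤ n-2`, and `D(x_{n-1}) = z·x₀`. -/
noncomputable def airyDvals (n : ℕ) : Fin (n + 1) → MvPolynomial (Fin (n + 1)) ℂ :=
  fun j =>
    if (j : ℕ) = 0 then 0
    else if h : (j : ℕ) + 1 < n + 1 then MvPolynomial.X ⟨(j : ℕ) + 1, h⟩
    else MvPolynomial.X 0 * MvPolynomial.X 1

/-- The operator `θ(f) = ∂f/∂z + D(f)`. -/
noncomputable def airyTheta (n : ℕ) :
    MvPolynomial (Fin (n + 1)) ℂ →ₗ[ℂ] MvPolynomial (Fin (n + 1)) ℂ :=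
  (MvPolynomial.pderiv 0).toLinearMap +
    (MvPolynomial.mkDerivation ℂ (airyDvals n)).toLinearMap

/-- `P_k`: polynomials homogeneous of total degree `k` in `x₀, …, x_{n-1}` (the variable
`z` carrying weight `0`). -/
noncomputable def airyPk (n k : ℕ) : Submodule ℂ (MvPolynomial (Fin (n + 1)) ℂ) :=
  MvPolynomial.weightedHomogeneousSubmodule ℂ (fun j => if (j : ℕ) = 0 then 0 else 1) k

/-! ### Degree and weight of monomials -/

/-- The degree of a monomial in `x₀, …, x_{n-1}`. -/
def xdeg {n : ℕ} (m : Fin (n + 1) →₀ ℕ) : ℕ := ∑ i : Fin n, m i.succ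

/-- The weight of a monomial, with `z` of weight `n` and `x_i` of weight `i`. -/
def zwt {n : ℕ} (m : Fin (n + 1) →₀ ℕ) : ℕ := n * m 0 + ∑ i : Fin n, (i : ℕ) * m i.succ

lemma xdeg_add {n : ℕ} (a b : Fin (n + 1) →₀ ℕ) : xdeg (a + b) = xdeg a + xdeg b := by
  simp [xdeg, Finset.sum_add_distrib]

lemma zwt_add {n : ℕ} (a b : Fin (n + 1) →₀ ℕ) : zwt (a + b) = zwt a + zwt b := by
  simp only [zwt, Finsupp.add_apply, mul_add, Finset.sum_add_distrib]; ring

lemma xdeg_single_zero {n : ℕ} : xdeg (Finsupp.single (0 : Fin (n + 1)) 1) = 0 := by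
  simp [xdeg, Fin.ext_iff]

lemma zwt_single_zero {n : ℕ} : zwt (Finsupp.single (0 : Fin (n + 1)) 1) = n := by
  simp [zwt, Fin.ext_iff]

lemma xdeg_single_succ {n : ℕ} (i : Fin n) : xdeg (Finsupp.single i.succ 1) = 1 := by
  simp [xdeg, Finsupp.single_apply]

lemma zwt_single_succ {n : ℕ} (i : Fin n) : zwt (Finsupp.single i.succ 1) = i := by
  simp [zwt, Finsupp.single_apply]

lemma airyDvals_zero (n : ℕ) : airyDvals n 0 = 0 := by simp [airyDvals]

lemma airyDvals_succ_of_lt {n : ℕ} (i : Fin n) (h : (i : ℕ) + 1 < n) :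
    airyDvals n i.succ = X (⟨(i : ℕ) + 1, h⟩ : Fin n).succ := by
  simp [airyDvals, h]

lemma airyDvals_succ_of_not_lt {n : ℕ} (i : Fin n) (h : ¬ (i : ℕ) + 1 < n) :
    airyDvals n i.succ = X 0 * X (⟨0, i.pos⟩ : Fin n).succ := by
  have : (⟨0, i.pos⟩ : Fin n).succ = 1 := by
    apply Fin.ext
    have := i.pos
    simp [Nat.mod_eq_of_lt (show 1 < n + 1 by lia)]
  rw [this]
  simp [airyDvals, h]

/-- The derivation `D`. -/
noncomputable abbrev airyD (n : ℕ) :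
    Derivation ℂ (MvPolynomial (Fin (n + 1)) ℂ) (MvPolynomial (Fin (n + 1)) ℂ) :=
  mkDerivation ℂ (airyDvals n)

lemma mem_of_monomials {σ M : Type*} [AddCommGroup M] [Module ℂ M]
    (L : MvPolynomial σ ℂ →ₗ[ℂ] M) {s : Set (σ →₀ ℕ)} {W : Submodule ℂ M}
    (h : ∀ m ∈ s, L (monomial m 1) ∈ W) {f : MvPolynomial σ ℂ}
    (hf : f ∈ restrictSupport ℂ s) : L f ∈ W := by
  rw [restrictSupport_eq_span] at hf
  have : Submodule.span ℂ ((monomial · (1 : ℂ)) '' s) ≤ W.comap L := by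
    rw [Submodule.span_le]
    rintro _ ⟨m, hm, rfl⟩
    exact h m hm
  exact this hf

/-- `D` preserves the degree in the `x_i` and raises the weight by `1`. -/
lemma airyD_mem {n : ℕ} {s t : Set (Fin (n + 1) →₀ ℕ)}
    (hst : ∀ m ∈ s, ∀ m', xdeg m' = xdeg m → zwt m' = zwt m + 1 → m' ∈ t)
    {f : MvPolynomial (Fin (n + 1)) ℂ} (hf : f ∈ restrictSupport ℂ s) :
    airyD n f ∈ restrictSupport ℂ t := by
  refine mem_of_monomials (airyD n).toLinearMap (fun m hm => ?_) hf
  change airyD n (monomial m 1) ∈ _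
  rw [mkDerivation_monomial, one_smul]
  refine Submodule.sum_mem _ fun i hi => ?_
  rw [Finsupp.mem_support_iff] at hi
  obtain ⟨e, rfl⟩ : ∃ e, m = e + Finsupp.single i 1 :=
    ⟨m - Finsupp.single i 1, (tsub_add_cancel_of_le (by
      rw [Finsupp.single_le_iff]; lia)).symm⟩
  beta_reduce
  rw [add_tsub_cancel_right, smul_eq_mul]
  have key := hst _ hm
  rw [xdeg_add, zwt_add] at key
  induction i using Fin.cases with
  | zero => simp [airyDvals_zero]
  | succ i =>
    by_cases h : (i : ℕ) + 1 < n
    · rw [airyDvals_succ_of_lt i h, X, monomial_mul, monomial_mem_restrictSupport]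
      left
      apply key
      · simp only [xdeg_add, xdeg_single_succ]
      · simp only [zwt_add, zwt_single_succ]; lia
    · rw [airyDvals_succ_of_not_lt i h, X, X, monomial_mul, monomial_mul,
        monomial_mem_restrictSupport]
      left
      apply key
      · simp only [xdeg_add, xdeg_single_succ, xdeg_single_zero, zero_add]
      · simp only [zwt_add, zwt_single_succ, zwt_single_zero]; have := i.2; lia

/-- `∂/∂z` preserves the degree in the `x_i` and lowers the weight by `n`. -/
lemma pderiv_zero_mem {n : ℕ} {s t : Set (Fin (n + 1) →₀ ℕ)}
    (hst : ∀ m ∈ s, ∀ m', xdeg m' = xdeg m → zwt m' + n = zwt m → m' ∈ t)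
    {f : MvPolynomial (Fin (n + 1)) ℂ} (hf : f ∈ restrictSupport ℂ s) :
    pderiv 0 f ∈ restrictSupport ℂ t := by
  refine mem_of_monomials (pderiv 0).toLinearMap (fun m hm => ?_) hf
  change pderiv 0 (monomial m 1) ∈ _
  rw [pderiv_monomial, one_mul, monomial_mem_restrictSupport]
  by_cases hi : m 0 = 0
  · simp [hi]
  obtain ⟨e, rfl⟩ : ∃ e, m = e + Finsupp.single 0 1 :=
    ⟨m - Finsupp.single 0 1, (tsub_add_cancel_of_le (by
      rw [Finsupp.single_le_iff]; lia)).symm⟩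
  rw [add_tsub_cancel_right]
  left
  apply hst _ hm
  · rw [xdeg_add, xdeg_single_zero, add_zero]
  · rw [zwt_add, zwt_single_zero]

lemma airyPk_eq (n k : ℕ) : airyPk n k = restrictSupport ℂ {m | xdeg m = k} := by
  rw [airyPk, weightedHomogeneousSubmodule_eq_finsupp_supported]
  have (m : Fin (n + 1) →₀ ℕ) :
      Finsupp.weight (fun j : Fin (n + 1) => if (j : ℕ) = 0 then 0 else 1) m = xdeg m := by
    rw [Finsupp.weight_apply, Finsupp.sum_fintype _ _ (by simp), Fin.sum_univ_succ]
    simp [xdeg]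
  simp only [this]
  rfl

/-- The weight `d` part of `P_k`. -/
noncomputable abbrev gr (n k d : ℕ) : Submodule ℂ (MvPolynomial (Fin (n + 1)) ℂ) :=
  restrictSupport ℂ {m | xdeg m = k ∧ zwt m = d}

/-- The part of `P_k` of weight strictly less than `d`. -/
noncomputable abbrev fil (n k d : ℕ) : Submodule ℂ (MvPolynomial (Fin (n + 1)) ℂ) :=
  restrictSupport ℂ {m | xdeg m = k ∧ zwt m < d}

lemma disjoint_support {σ : Type*} {s t : Set (σ →₀ ℕ)} (h : Disjoint s t)
    {f : MvPolynomial σ ℂ} (hs : f ∈ restrictSupport ℂ s) (ht : f ∈ restrictSupport ℂ t) :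
    f = 0 := by
  rw [mem_restrictSupport_iff] at hs ht
  rw [← support_eq_empty, ← Finset.coe_eq_empty]
  exact Set.subset_empty_iff.1 (h hs ht)

lemma restrictSupport_union {σ : Type*} (s t : Set (σ →₀ ℕ)) :
    restrictSupport ℂ (s ∪ t) = restrictSupport ℂ s ⊔ restrictSupport ℂ t := by
  simp only [restrictSupport_eq_span, Set.image_union, Submodule.span_union]

lemma fil_succ (n k d : ℕ) : fil n k (d + 1) = gr n k d ⊔ fil n k d := by
  rw [fil, gr, fil, ← restrictSupport_union]
  congr 1
  ext m
  simp only [Set.mem_ofPred_eq, Set.mem_union]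
  lia

lemma finite_xdeg_zwt {n : ℕ} (hn : 1 ≤ n) (k d : ℕ) :
    {m : Fin (n + 1) →₀ ℕ | xdeg m = k ∧ zwt m < d}.Finite := by
  refine (Set.finite_Iic (Finsupp.equivFunOnFinite.symm fun _ => d + k)).subset ?_
  rintro m ⟨h1, h2⟩ i
  simp only [Finsupp.equivFunOnFinite_symm_apply_apply]
  induction i using Fin.cases with
  | zero =>
    have : 1 * m 0 ≤ n * m 0 := Nat.mul_le_mul_right _ hn
    simp only [zwt] at h2
    lia
  | succ i =>
    have := Finset.single_le_sum (f := fun i : Fin n => m i.succ) (fun _ _ => Nat.zero_le _)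
      (Finset.mem_univ i)
    simp only [xdeg] at h1
    lia

/-! ### Injectivity of `D` on weight components -/

/-- The derivation of `ℂ[y₀, …, y_{n-1}]` with `y_j ↦ ξ^j y_j`. -/
noncomputable def eigD (n : ℕ) (ξ : ℂ) :
    Derivation ℂ (MvPolynomial (Fin n) ℂ) (MvPolynomial (Fin n) ℂ) :=
  mkDerivation ℂ fun j => C (ξ ^ (j : ℕ)) * X j

lemma coeff_eigD (n : ℕ) (ξ : ℂ) (f : MvPolynomial (Fin n) ℂ) (m : Fin n →₀ ℕ) :
    coeff m (eigD n ξ f) = (∑ j, (m j : ℂ) * ξ ^ (j : ℕ)) * coeff m f := by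
  induction f using MvPolynomial.induction_on' with
  | add p q hp hq => simp [hp, hq, mul_add]
  | monomial s r =>
    have : eigD n ξ (monomial s r) = monomial s ((∑ j, (s j : ℂ) * ξ ^ (j : ℕ)) * r) := by
      rw [eigD, mkDerivation_monomial, Finsupp.sum_fintype _ _ (by simp), Finset.sum_mul,
        map_sum, Finset.smul_sum]
      refine Finset.sum_congr rfl fun i _ => ?_
      by_cases h : s i = 0
      · simp [h]
      rw [smul_eq_mul, mul_left_comm, X, monomial_mul, tsub_add_cancel_of_le (by
        rw [Finsupp.single_le_iff]; lia), C_mul_monomial, smul_monomial]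
      congr 1
      simp only [smul_eq_mul]
      ring
    rw [this, coeff_monomial, coeff_monomial]
    split_ifs with h
    · rw [h]
    · simp

/-- Specialisation `z = 1` followed by the discrete Fourier transform
`x_i ↦ ∑ j, ξ^{ij} y_j`, which diagonalises `D`. -/
noncomputable def airyFourier (n : ℕ) (ξ : ℂ) :
    MvPolynomial (Fin (n + 1)) ℂ →ₐ[ℂ] MvPolynomial (Fin n) ℂ :=
  aeval (Fin.cons 1 fun i => ∑ j : Fin n, C (ξ ^ ((i : ℕ) * (j : ℕ))) * X j)

lemma airyFourier_X_zero (n : ℕ) (ξ : ℂ) : airyFourier n ξ (X 0) = 1 := by simp [airyFourier]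

lemma airyFourier_X_succ (n : ℕ) (ξ : ℂ) (i : Fin n) :
    airyFourier n ξ (X i.succ) = ∑ j : Fin n, C (ξ ^ ((i : ℕ) * (j : ℕ))) * X j := by
  simp [airyFourier]

lemma eigD_airyFourier_X_succ (n : ℕ) (ξ : ℂ) (i : Fin n) :
    eigD n ξ (airyFourier n ξ (X i.succ)) =
      ∑ j : Fin n, C (ξ ^ (((i : ℕ) + 1) * (j : ℕ))) * X j := by
  rw [airyFourier_X_succ, map_sum]
  refine Finset.sum_congr rfl fun j _ => ?_
  rw [C_mul', Derivation.map_smul, eigD, mkDerivation_X, ← C_mul', ← mul_assoc, ← C_mul, ← pow_add,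
    add_mul, one_mul]

lemma airyFourier_airyD {n : ℕ} {ξ : ℂ} (hξ : ξ ^ n = 1) (f : MvPolynomial (Fin (n + 1)) ℂ) :
    airyFourier n ξ (airyD n f) = eigD n ξ (airyFourier n ξ f) := by
  induction f using MvPolynomial.induction_on with
  | C a =>
    rw [← algebraMap_eq, Derivation.map_algebraMap, AlgHom.commutes, Derivation.map_algebraMap,
      map_zero]
  | add p q hp hq => simp only [map_add, hp, hq]
  | mul_X p i hp =>
    have hX : airyFourier n ξ (airyD n (X i)) = eigD n ξ (airyFourier n ξ (X i)) := by
      rw [mkDerivation_X]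
      induction i using Fin.cases with
      | zero => rw [airyDvals_zero, airyFourier_X_zero, map_zero, Derivation.map_one_eq_zero]
      | succ i =>
        rw [eigD_airyFourier_X_succ]
        by_cases h : (i : ℕ) + 1 < n
        · rw [airyDvals_succ_of_lt i h, airyFourier_X_succ]
        · rw [airyDvals_succ_of_not_lt i h, map_mul, airyFourier_X_zero, one_mul, airyFourier_X_succ]
          have : (i : ℕ) + 1 = n := by have := i.2; lia
          simp [this, pow_mul, hξ]
    rw [Derivation.leibniz, map_mul, Derivation.leibniz, map_add, smul_eq_mul, smul_eq_mul,
      smul_eq_mul, smul_eq_mul, map_mul, map_mul, hX, hp]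

lemma airyFourier_isHomogeneous {n k d : ℕ} (ξ : ℂ) {f : MvPolynomial (Fin (n + 1)) ℂ}
    (hf : f ∈ gr n k d) : (airyFourier n ξ f).IsHomogeneous k := by
  rw [← mem_homogeneousSubmodule]
  refine mem_of_monomials (airyFourier n ξ).toLinearMap (fun m hm => ?_) hf
  rw [mem_homogeneousSubmodule, AlgHom.toLinearMap_apply, airyFourier, aeval_monomial, map_one,
    one_mul, Finsupp.prod_fintype _ _ (by simp), Fin.prod_univ_succ, Fin.cons_zero, one_pow,
    one_mul]
  obtain ⟨rfl, -⟩ := hm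
  refine IsHomogeneous.prod _ _ _ fun i _ => ?_
  rw [Fin.cons_succ]
  have h1 : (∑ j : Fin n, C (ξ ^ ((i : ℕ) * (j : ℕ))) * X j : MvPolynomial (Fin n) ℂ).IsHomogeneous
      1 := IsHomogeneous.sum _ _ _ fun j _ => (isHomogeneous_X ℂ j).C_mul _
  simpa using h1.pow (m i.succ)

/-- Specialisation `z = 1`. -/
noncomputable def spec (n : ℕ) : MvPolynomial (Fin (n + 1)) ℂ →ₐ[ℂ] MvPolynomial (Fin n) ℂ :=
  aeval (Fin.cons 1 X)

lemma spec_monomial (n : ℕ) (m : Fin (n + 1) →₀ ℕ) (r : ℂ) :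
    spec n (monomial m r) = monomial m.tail r := by
  rw [spec, aeval_monomial, Finsupp.prod_fintype _ _ (by simp), Fin.prod_univ_succ,
    monomial_eq, Finsupp.prod_fintype _ _ (by simp)]
  simp [algebraMap_eq, Finsupp.tail_apply]

/-- On a single weight component the exponent of `z` is determined by the other exponents, so
nothing is lost by setting `z = 1`. -/
lemma spec_injective {n k d : ℕ} (hn : 1 ≤ n) {f : MvPolynomial (Fin (n + 1)) ℂ}
    (hf : f ∈ gr n k d) (h : spec n f = 0) : f = 0 := by
  ext m
  rw [coeff_zero]
  by_contra hm
  rw [mem_restrictSupport_iff] at hf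
  have hc : coeff m.tail (spec n f) = coeff m f := by
    conv_lhs => rw [f.as_sum]
    rw [map_sum, coeff_sum]
    simp only [spec_monomial, coeff_monomial]
    rw [Finset.sum_eq_single m]
    · simp
    · intro b hb hbm
      rw [if_neg]
      intro htail
      apply hbm
      have h1 := (hf hb).2
      have h2 := (hf (Finset.mem_coe.2 (mem_support_iff.2 hm))).2
      have hs (i : Fin n) : b i.succ = m i.succ := by
        simpa [Finsupp.tail_apply] using DFunLike.congr_fun htail i
      simp only [zwt, hs] at h1 h2
      have h0 : b 0 = m 0 := Nat.eq_of_mul_eq_mul_left hn (by lia)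
      ext i
      induction i using Fin.cases with
      | zero => exact h0
      | succ i => exact hs i
    · intro h
      simpa using h
  rw [h, coeff_zero] at hc
  exact hm hc.symm

lemma sum_pow_orthogonality {n : ℕ} {ξ : ℂ} (hξ : IsPrimitiveRoot ξ n) (i l : Fin n) :
    ∑ j : Fin n, ξ ^ ((i : ℕ) * (j : ℕ)) * ξ⁻¹ ^ ((l : ℕ) * (j : ℕ)) =
      if i = l then (n : ℂ) else 0 := by
  have h0 : ξ ≠ 0 := hξ.ne_zero i.pos.ne'
  have : ∀ j : Fin n, ξ ^ ((i : ℕ) * (j : ℕ)) * ξ⁻¹ ^ ((l : ℕ) * (j : ℕ)) =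
      (ξ ^ (i : ℕ) / ξ ^ (l : ℕ)) ^ (j : ℕ) := by
    intro j
    rw [div_pow, ← pow_mul, ← pow_mul, inv_pow, div_eq_mul_inv]
  simp only [this]
  rw [Fin.sum_univ_eq_sum_range (fun j => (ξ ^ (i : ℕ) / ξ ^ (l : ℕ)) ^ j)]
  split_ifs with h
  · rw [h, div_self (pow_ne_zero _ h0)]
    simp
  · have h1 : ξ ^ (i : ℕ) / ξ ^ (l : ℕ) ≠ 1 := by
      rw [Ne, div_eq_one_iff_eq (pow_ne_zero _ h0)]
      exact fun hh => h (Fin.ext (hξ.pow_inj i.2 l.2 hh))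
    rw [geom_sum_eq h1, div_pow, ← pow_mul, ← pow_mul, mul_comm, pow_mul, mul_comm (l : ℕ),
      pow_mul, hξ.pow_eq_one]
    simp

/-- The inverse discrete Fourier transform. -/
noncomputable def invFourier (n : ℕ) (ξ : ℂ) :
    MvPolynomial (Fin n) ℂ →ₐ[ℂ] MvPolynomial (Fin n) ℂ :=
  aeval fun j => ∑ l : Fin n, C ((n : ℂ)⁻¹ * ξ⁻¹ ^ ((l : ℕ) * (j : ℕ))) * X l

lemma invFourier_airyFourier {n : ℕ} {ξ : ℂ} (hξ : IsPrimitiveRoot ξ n)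
    (f : MvPolynomial (Fin (n + 1)) ℂ) : invFourier n ξ (airyFourier n ξ f) = spec n f := by
  suffices (invFourier n ξ).comp (airyFourier n ξ) = spec n from DFunLike.congr_fun this f
  refine MvPolynomial.algHom_ext fun i => ?_
  rw [AlgHom.comp_apply]
  induction i using Fin.cases with
  | zero => simp [airyFourier_X_zero, spec]
  | succ i =>
    have hn : (n : ℂ) ≠ 0 := Nat.cast_ne_zero.2 i.pos.ne'
    rw [airyFourier_X_succ]
    simp only [map_sum, C_mul', map_smul]
    simp only [invFourier, aeval_X, C_mul', Finset.smul_sum, smul_smul]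
    rw [Finset.sum_comm]
    simp only [← Finset.sum_smul, mul_left_comm _ ((n : ℂ)⁻¹), ← Finset.mul_sum,
      sum_pow_orthogonality hξ]
    simp [spec, hn]

/-- `D` is injective on each weight component: after the Fourier transform it multiplies the
monomial `y^I` by `∑ I_j ξ^j`, which is nonzero by hypothesis. -/
lemma airyD_injective {n k d : ℕ} (hn : 1 ≤ n) {ξ : ℂ} (hξ : IsPrimitiveRoot ξ n)
    (hno : ¬∃ I : Fin n → ℕ,
      (∑ i, I i) = k ∧ (∑ i : Fin n, (I i : ℂ) * ξ ^ (i : ℕ)) = 0)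
    {f : MvPolynomial (Fin (n + 1)) ℂ} (hf : f ∈ gr n k d) (h : airyD n f = 0) : f = 0 := by
  apply spec_injective hn hf
  rw [← invFourier_airyFourier hξ]
  suffices airyFourier n ξ f = 0 by rw [this, map_zero]
  have hE : eigD n ξ (airyFourier n ξ f) = 0 := by
    rw [← airyFourier_airyD hξ.pow_eq_one, h, map_zero]
  ext m
  rw [coeff_zero]
  by_contra hm
  have hdeg := airyFourier_isHomogeneous ξ hf hm
  have hc := coeff_eigD n ξ (airyFourier n ξ f) m
  rw [hE, coeff_zero] at hc
  refine hno ⟨m, ?_, (mul_eq_zero.1 hc.symm).resolve_right hm⟩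
  rw [← hdeg, Finsupp.weight_apply, Finsupp.sum_fintype _ _ (by simp)]
  simp

/-! ### Dimensions of the weight components -/

lemma finite_weight {n : ℕ} (hn : 1 ≤ n) (k d : ℕ) :
    {m : Fin (n + 1) →₀ ℕ | xdeg m = k ∧ zwt m = d}.Finite :=
  (finite_xdeg_zwt hn k (d + 1)).subset fun m hm => ⟨hm.1, by have := hm.2; lia⟩

lemma finrank_restrictSupport {σ : Type*} (s : Set (σ →₀ ℕ)) :
    Module.finrank ℂ (restrictSupport ℂ s) = s.ncard :=
  Module.finrank_eq_nat_card_basis (basisRestrictSupport ℂ s)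

lemma finite_restrictSupport {σ : Type*} {s : Set (σ →₀ ℕ)} (hs : s.Finite) :
    FiniteDimensional ℂ (restrictSupport ℂ s) :=
  have : Finite s := hs
  Module.Finite.of_basis (basisRestrictSupport ℂ s)

/-- In any `n` consecutive large weights, each monomial in the `x_i` of degree `k` occurs exactly
once, multiplied by a suitable power of `z`. -/
lemma sum_finrank_gr {n : ℕ} (hn : 1 ≤ n) (k d : ℕ) (hd : n * k ≤ d) :
    ∑ r ∈ Finset.Ico d (d + n), Module.finrank ℂ (gr n k r) = (n + k - 1).choose k := by
  classical
  have hfin : {m : Fin (n + 1) →₀ ℕ | xdeg m = k ∧ zwt m < d + n}.Finite := finite_xdeg_zwt hn k _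
  have hcard := Finset.card_finsuppAntidiag_nat_eq_choose (s := (Finset.univ : Finset (Fin n))) k
  rw [Finset.card_univ, Fintype.card_fin] at hcard
  rw [← hcard]
  set T := hfin.toFinset.filter (fun m => d ≤ zwt m) with hT
  have memT (m : Fin (n + 1) →₀ ℕ) : m ∈ T ↔ xdeg m = k ∧ d ≤ zwt m ∧ zwt m < d + n := by
    simp only [hT, Finset.mem_filter, Set.Finite.mem_toFinset, Set.mem_ofPred_eq]
    tauto
  have h1 : T.card = ∑ r ∈ Finset.Ico d (d + n), Module.finrank ℂ (gr n k r) := by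
    rw [Finset.card_eq_sum_card_fiberwise (f := zwt) (t := Finset.Ico d (d + n))]
    · refine Finset.sum_congr rfl fun r hr => ?_
      rw [finrank_restrictSupport, ← Set.ncard_coe_finset]
      congr 1
      ext m
      rw [Finset.mem_Ico] at hr
      simp only [Finset.coe_filter, memT, Set.mem_ofPred_eq]
      lia
    · intro m hm
      have := (memT m).1 hm
      simpa using this.2
  rw [← h1]
  refine Finset.card_bij (fun m _ => m.tail) ?_ ?_ ?_
  · intro m hm
    rw [Finset.mem_finsuppAntidiag]
    refine ⟨?_, Finset.subset_univ _⟩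
    rw [← ((memT m).1 hm).1]
    rfl
  · intro a ha b hb hab
    obtain ⟨-, ha1, ha2⟩ := (memT a).1 ha
    obtain ⟨-, hb1, hb2⟩ := (memT b).1 hb
    have hs (i : Fin n) : a i.succ = b i.succ := by
      simpa [Finsupp.tail_apply] using DFunLike.congr_fun hab i
    simp only [zwt, hs] at ha1 ha2 hb1 hb2
    have h0 : a 0 = b 0 := by
      have l1 : n * a 0 < n * (b 0 + 1) := by rw [mul_add]; lia
      have l2 : n * b 0 < n * (a 0 + 1) := by rw [mul_add]; lia
      have := Nat.lt_of_mul_lt_mul_left l1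
      have := Nat.lt_of_mul_lt_mul_left l2
      lia
    ext i
    induction i using Fin.cases with
    | zero => exact h0
    | succ i => exact hs i
  · intro I hI
    rw [Finset.mem_finsuppAntidiag] at hI
    have hw : ∑ i : Fin n, (i : ℕ) * I i ≤ n * k := by
      rw [← hI.1, Finset.mul_sum]
      exact Finset.sum_le_sum fun i _ => Nat.mul_le_mul_right _ i.2.le
    set w := ∑ i : Fin n, (i : ℕ) * I i with hwdef
    -- The exponent of `z` is the smallest `a` with `d ≤ n * a + w`, that is `⌈(d - w) / n⌉`.
    refine ⟨Finsupp.cons ((d - w + (n - 1)) / n) I, ?_, Finsupp.tail_cons _ _⟩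
    rw [memT]
    have hdm := Nat.div_add_mod (d - w + (n - 1)) n
    have hlt := Nat.mod_lt (d - w + (n - 1)) hn
    refine ⟨?_, ?_⟩
    · simpa [xdeg] using hI.1
    · simp only [zwt, Finsupp.cons_zero, Finsupp.cons_succ, ← hwdef]
      lia

/-! ### Comparing `θ` with its leading part `D` -/

section

variable {n k : ℕ} {ξ : ℂ}

lemma airyD_gr_mem {d : ℕ} {f : MvPolynomial (Fin (n + 1)) ℂ} (hf : f ∈ gr n k d) :
    airyD n f ∈ gr n k (d + 1) := by
  refine airyD_mem (fun m hm m' h1 h2 => ?_) hf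
  exact ⟨h1.trans hm.1, by rw [h2, hm.2]⟩

lemma airyD_fil_mem {d : ℕ} {f : MvPolynomial (Fin (n + 1)) ℂ} (hf : f ∈ fil n k d) :
    airyD n f ∈ fil n k (d + 1) := by
  refine airyD_mem (fun m hm m' h1 h2 => ?_) hf
  exact ⟨h1.trans hm.1, by have := hm.2; lia⟩

lemma pderiv_fil_mem {d : ℕ} {f : MvPolynomial (Fin (n + 1)) ℂ} (hf : f ∈ fil n k d) :
    pderiv 0 f ∈ fil n k d := by
  refine pderiv_zero_mem (fun m hm m' h1 h2 => ?_) hf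
  exact ⟨h1.trans hm.1, by have := hm.2; lia⟩

lemma airyTheta_apply (f : MvPolynomial (Fin (n + 1)) ℂ) :
    airyTheta n f = pderiv 0 f + airyD n f := rfl

lemma fil_mono {d e : ℕ} (h : d ≤ e) : fil n k d ≤ fil n k e :=
  restrictSupport_mono ℂ fun _ hm => ⟨hm.1, hm.2.trans_le h⟩

lemma fil_le_airyPk (d : ℕ) : fil n k d ≤ airyPk n k := by
  rw [airyPk_eq]
  exact restrictSupport_mono ℂ fun _ hm => hm.1

lemma gr_le_fil (d : ℕ) : gr n k d ≤ fil n k (d + 1) := by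
  rw [fil_succ]; exact le_sup_left

lemma gr_le_airyPk (d : ℕ) : gr n k d ≤ airyPk n k := (gr_le_fil d).trans (fil_le_airyPk _)

lemma exists_mem_fil {f : MvPolynomial (Fin (n + 1)) ℂ} (hf : f ∈ airyPk n k) :
    ∃ d, f ∈ fil n k d := by
  rw [airyPk_eq, mem_restrictSupport_iff] at hf
  refine ⟨f.support.sup zwt + 1, ?_⟩
  rw [mem_restrictSupport_iff]
  exact fun m hm => ⟨hf hm, Nat.lt_succ_of_le (Finset.le_sup hm)⟩

lemma airyTheta_airyPk_mem {f : MvPolynomial (Fin (n + 1)) ℂ} (hf : f ∈ airyPk n k) :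
    airyTheta n f ∈ airyPk n k := by
  rw [airyPk_eq] at hf ⊢
  rw [airyTheta_apply]
  exact add_mem (pderiv_zero_mem (fun m hm m' h1 _ => h1.trans hm) hf)
    (airyD_mem (fun m hm m' h1 _ => h1.trans hm) hf)

lemma airyTheta_fil_mem {d : ℕ} {f : MvPolynomial (Fin (n + 1)) ℂ} (hf : f ∈ fil n k d) :
    airyTheta n f ∈ fil n k (d + 1) :=
  add_mem (fil_mono (Nat.le_succ d) (pderiv_fil_mem hf)) (airyD_fil_mem hf)

/-- The leading part `D` of `θ` being injective, `θ` strictly raises the filtration by `1`. -/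
lemma mem_fil_of_airyTheta_mem
    (hD : ∀ d, ∀ f ∈ gr n k d, airyD n f = 0 → f = 0)
    {d : ℕ} {f : MvPolynomial (Fin (n + 1)) ℂ} (hf : f ∈ airyPk n k)
    (h : airyTheta n f ∈ fil n k (d + 1)) : f ∈ fil n k d := by
  obtain ⟨e, he⟩ := exists_mem_fil hf
  induction e with
  | zero => exact fil_mono (Nat.zero_le d) he
  | succ e ih =>
    rcases Nat.lt_or_ge e d with hed | hed
    · exact fil_mono hed he
    have hp := pderiv_fil_mem he
    have he' := he
    rw [fil_succ] at he'
    obtain ⟨g, hg, q, hq, rfl⟩ := Submodule.mem_sup.1 he'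
    have hDg : airyD n g ∈ fil n k (e + 1) := by
      have : airyD n g = airyTheta n (g + q) - pderiv 0 (g + q) - airyD n q := by
        rw [airyTheta_apply, map_add (airyD n)]; ring
      rw [this]
      exact sub_mem (sub_mem (fil_mono (by lia) h) hp) (airyD_fil_mem hq)
    have hg0 : g = 0 := by
      refine hD e g hg (disjoint_support ?_ (airyD_gr_mem hg) hDg)
      rw [Set.disjoint_left]
      rintro m ⟨-, h1⟩ ⟨-, h2⟩
      lia
    apply ih
    rw [hg0, zero_add]
    exact hq

lemma airyTheta_injOn (hD : ∀ d, ∀ f ∈ gr n k d, airyD n f = 0 → f = 0)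
    {f : MvPolynomial (Fin (n + 1)) ℂ} (hf : f ∈ airyPk n k) (h : airyTheta n f = 0) :
    f = 0 := by
  have h0 : f ∈ fil n k 0 := mem_fil_of_airyTheta_mem hD hf (h ▸ zero_mem _)
  refine disjoint_support (s := {m | xdeg m = k ∧ zwt m < 0}) ?_ h0 h0
  rw [Set.disjoint_left]
  rintro m ⟨-, h1⟩ -
  lia

lemma finrank_gr_le (hn : 1 ≤ n) (hD : ∀ d, ∀ f ∈ gr n k d, airyD n f = 0 → f = 0) (d : ℕ) :
    Module.finrank ℂ (gr n k d) ≤ Module.finrank ℂ (gr n k (d + 1)) := by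
  have := finite_restrictSupport (finite_weight hn k (d + 1))
  refine LinearMap.finrank_le_finrank_of_injective
    (f := (airyD n).toLinearMap.restrict fun f hf => airyD_gr_mem hf) ?_
  rw [injective_iff_map_eq_zero]
  intro f hf
  exact Subtype.ext (hD d f f.2 (congrArg Subtype.val hf))

/-- `D` is onto between consecutive weight components of equal dimension. -/
lemma exists_airyD_eq (hn : 1 ≤ n) (hD : ∀ d, ∀ f ∈ gr n k d, airyD n f = 0 → f = 0) {d : ℕ}
    (h : Module.finrank ℂ (gr n k d) = Module.finrank ℂ (gr n k (d + 1)))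
    {g : MvPolynomial (Fin (n + 1)) ℂ} (hg : g ∈ gr n k (d + 1)) :
    ∃ f ∈ gr n k d, airyD n f = g := by
  have := finite_restrictSupport (finite_weight hn k d)
  have := finite_restrictSupport (finite_weight hn k (d + 1))
  have hinj : Function.Injective
      ((airyD n).toLinearMap.restrict fun f (hf : f ∈ gr n k d) => airyD_gr_mem hf) := by
    rw [injective_iff_map_eq_zero]
    intro f hf
    exact Subtype.ext (hD d f f.2 (congrArg Subtype.val hf))
  obtain ⟨f, hf⟩ := (LinearMap.injective_iff_surjective_of_finrank_eq_finrank h).1 hinj ⟨g, hg⟩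
  exact ⟨f, f.2, congrArg Subtype.val hf⟩

/-- Modulo the image of `θ`, elements of weight above `d` can be lowered to weight at most `d`. -/
lemma fil_le_sup (hn : 1 ≤ n) (hD : ∀ d, ∀ f ∈ gr n k d, airyD n f = 0 → f = 0) {d : ℕ}
    (h : ∀ e, d ≤ e → Module.finrank ℂ (gr n k e) = Module.finrank ℂ (gr n k (e + 1)))
    {e : ℕ} (he : d ≤ e) :
    fil n k (e + 1) ≤ fil n k (d + 1) ⊔ Submodule.map (airyTheta n) (airyPk n k) := by
  induction e, he using Nat.le_induction with
  | base => exact le_sup_left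
  | succ e he ih =>
    rw [fil_succ n k (e + 1)]
    refine sup_le (fun g hg => ?_) ih
    obtain ⟨f, hf, rfl⟩ := exists_airyD_eq hn hD (h e he) hg
    have : airyD n f = -pderiv 0 f + airyTheta n f := by rw [airyTheta_apply]; ring
    rw [this]
    refine add_mem (neg_mem (ih (pderiv_fil_mem (gr_le_fil e hf)))) ?_
    exact (le_sup_right : _ ≤ fil n k (d + 1) ⊔ _) ⟨f, gr_le_airyPk e hf, rfl⟩

lemma finrank_fil_succ (hn : 1 ≤ n) (d : ℕ) : Module.finrank ℂ (fil n k (d + 1)) =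
    Module.finrank ℂ (gr n k d) + Module.finrank ℂ (fil n k d) := by
  rw [finrank_restrictSupport, finrank_restrictSupport, finrank_restrictSupport,
    ← Set.ncard_union_eq ?_ (finite_weight hn k d) (finite_xdeg_zwt hn k d)]
  · congr 1
    ext m
    simp only [Set.mem_ofPred_eq, Set.mem_union]
    lia
  · rw [Set.disjoint_left]
    rintro m ⟨-, h1⟩ ⟨-, h2⟩
    lia

/-- The cokernel of `θ` on `P_k`. -/
abbrev airyCoker (n k : ℕ) : Type :=
  ↥(airyPk n k) ⧸
    Submodule.comap (airyPk n k).subtype (Submodule.map (airyTheta n) (airyPk n k))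

/-- If the weight components have constant dimension from weight `d` on, the cokernel of `θ` is
the cokernel of its restriction from weights `< d` to weights `≤ d`, whose dimension is that of the
weight `d` component. -/
lemma finrank_coker (hn : 1 ≤ n) (hD : ∀ d, ∀ f ∈ gr n k d, airyD n f = 0 → f = 0) {d : ℕ}
    (h : ∀ e, d ≤ e → Module.finrank ℂ (gr n k e) = Module.finrank ℂ (gr n k (e + 1))) :
    FiniteDimensional ℂ (airyCoker n k) ∧
      Module.finrank ℂ (airyCoker n k) = Module.finrank ℂ (gr n k d) := by
  have hfin1 := finite_restrictSupport (finite_xdeg_zwt hn k (d + 1))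
  have hfin := finite_restrictSupport (finite_xdeg_zwt hn k d)
  let q : fil n k (d + 1) →ₗ[ℂ] airyCoker n k :=
    (Submodule.mkQ _).comp (Submodule.inclusion (fil_le_airyPk (d + 1)))
  have hsurj : Function.Surjective q := by
    intro y
    obtain ⟨⟨f, hf⟩, rfl⟩ := Submodule.mkQ_surjective _ y
    obtain ⟨e, he⟩ := exists_mem_fil hf
    have hmem := fil_le_sup hn hD h (le_max_left d e)
      (fil_mono ((le_max_right d e).trans (Nat.le_succ _)) he)
    obtain ⟨u, hu, v, hv, rfl⟩ := Submodule.mem_sup.1 hmem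
    refine ⟨⟨u, hu⟩, (Submodule.Quotient.eq _).2 ?_⟩
    rw [Submodule.mem_comap]
    simpa using hv
  have hker : LinearMap.ker q =
      Submodule.comap (fil n k (d + 1)).subtype (Submodule.map (airyTheta n) (fil n k d)) := by
    ext ⟨f, hf⟩
    rw [LinearMap.mem_ker, Submodule.mem_comap]
    change Submodule.Quotient.mk _ = 0 ↔ _
    rw [Submodule.Quotient.mk_eq_zero, Submodule.mem_comap]
    constructor
    · rintro ⟨g, hg, hgf⟩
      refine ⟨g, mem_fil_of_airyTheta_mem hD hg ?_, hgf⟩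
      rw [hgf]
      exact hf
    · rintro ⟨g, hg, hgf⟩
      exact ⟨g, fil_le_airyPk d hg, hgf⟩
  have hle : Submodule.map (airyTheta n) (fil n k d) ≤ fil n k (d + 1) := by
    rintro _ ⟨g, hg, rfl⟩
    exact airyTheta_fil_mem hg
  have hmap : Module.finrank ℂ (Submodule.map (airyTheta n) (fil n k d)) =
      Module.finrank ℂ (fil n k d) := by
    rw [← LinearMap.range_domRestrict]
    refine LinearMap.finrank_range_of_inj ?_
    rw [injective_iff_map_eq_zero]
    intro f hf
    exact Subtype.ext (airyTheta_injOn hD (fil_le_airyPk d f.2) hf)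
  refine ⟨Module.Finite.of_surjective q hsurj, ?_⟩
  have hrn := q.finrank_range_add_finrank_ker
  rw [LinearMap.range_eq_top.2 hsurj, finrank_top, hker,
    (Submodule.comapSubtypeEquivOfLe hle).finrank_eq, hmap, finrank_fil_succ hn] at hrn
  lia

/-- The dimensions of the weight components are nondecreasing and, for large weights, their sums
over `n` consecutive weights are constant; hence they are eventually constant. -/
lemma finrank_gr_succ (hn : 1 ≤ n) (hD : ∀ d, ∀ f ∈ gr n k d, airyD n f = 0 → f = 0) {e : ℕ}
    (he : n * k ≤ e) : Module.finrank ℂ (gr n k e) = Module.finrank ℂ (gr n k (e + 1)) := by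
  have h1 := sum_finrank_gr hn k e he
  have h2 := sum_finrank_gr hn k (e + 1) (by lia)
  rw [Finset.sum_eq_sum_Ico_succ_bot (by lia)] at h1
  rw [show e + 1 + n = (e + n) + 1 by ring, Finset.sum_Ico_succ_top (by lia)] at h2
  have hmono := monotone_nat_of_le_succ (finrank_gr_le hn hD) (show e + 1 ≤ e + n by lia)
  have := finrank_gr_le hn hD e
  lia

end

/-- Let `n ≥ 2`, `k ≥ 1`, `ξ` a primitive `n`-th root of unity, and
assume there is no `I ∈ ℕ^{n}` with `|I| = k` and `Σ_i I_i ξ^i = 0`.  Then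
`θ = ∂_z + D` is injective on `P_k`, maps `P_k` into `P_k`, its cokernel on `P_k` is a
finite-dimensional `ℂ`-vector space, and `n·dim_ℂ coker(θ) = C(k+n-1, n-1)`. -/
theorem airy_deRham_dimension (n k : ℕ) (hn : 2 ≤ n) (hk : 1 ≤ k) (ξ : ℂ)
    (hξ : IsPrimitiveRoot ξ n)
    (hno : ¬∃ I : Fin n → ℕ,
      (∑ i, I i) = k ∧ (∑ i : Fin n, (I i : ℂ) * ξ ^ (i : ℕ)) = 0) :
    Set.InjOn (airyTheta n) (airyPk n k) ∧
    Submodule.map (airyTheta n) (airyPk n k) ≤ airyPk n k ∧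
    FiniteDimensional ℂ
      (↥(airyPk n k) ⧸
        Submodule.comap (airyPk n k).subtype
          (Submodule.map (airyTheta n) (airyPk n k))) ∧
    n * Module.finrank ℂ
      (↥(airyPk n k) ⧸
        Submodule.comap (airyPk n k).subtype
          (Submodule.map (airyTheta n) (airyPk n k))) = (k + n - 1).choose (n - 1) := by
  have hn1 : 1 ≤ n := by lia
  have hD : ∀ d, ∀ f ∈ gr n k d, airyD n f = 0 → f = 0 :=
    fun d f hf => airyD_injective hn1 hξ hno hf
  have hstable : ∀ e, n * k ≤ e →
      Module.finrank ℂ (gr n k e) = Module.finrank ℂ (gr n k (e + 1)) :=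
    fun e he => finrank_gr_succ hn1 hD he
  obtain ⟨hfin, hrank⟩ := finrank_coker hn1 hD hstable
  refine ⟨?_, ?_, hfin, ?_⟩
  · intro f hf g hg hfg
    refine sub_eq_zero.1 (airyTheta_injOn hD (sub_mem hf hg) ?_)
    rw [map_sub, hfg, sub_self]
  · rintro _ ⟨f, hf, rfl⟩
    exact airyTheta_airyPk_mem hf
  · rw [hrank]
    have hconst : ∀ e, n * k ≤ e →
        Module.finrank ℂ (gr n k e) = Module.finrank ℂ (gr n k (n * k)) := by
      intro e he
      induction e, he using Nat.le_induction with
      | base => rfl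
      | succ e he ih => rw [← hstable e he, ih]
    have hsum := sum_finrank_gr hn1 k (n * k) le_rfl
    rw [Finset.sum_congr rfl fun e he => hconst e (Finset.mem_Ico.1 he).1, Finset.sum_const,
      Nat.card_Ico, add_tsub_cancel_left, smul_eq_mul] at hsum
    rw [hsum, add_comm k n]
    exact Nat.choose_symm_of_eq_add (by lia)
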